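/- For every connected finite simple graph G with n ≥ 2 vertices, minimum degree δ and maximum degree Δ (so Δ ≥ 1), α(G) ≤ Γ(G) ≤ max{ α(G), n/2 + α(G)·(Δ−δ)/(2Δ) − (Δ−δ)/Δ } (equivalently, 2Δ·Γ(G) ≤ max{ 2Δ·α(G), Δ·n + (Δ−δ)·α(G) − 2(Δ−δ) }). -/

import Mathlib

/-!
A maximum independent set is dominating, and removing a vertex from it leaves that vertex
undominated, so it is a minimal dominating set; hence `α ≤ Γ`.

For the upper bound let `D` be a minimal dominating set of size `Γ`, let `A` be the vertices of `D`
isolated in `G[D]`, and `B = D \ A`. If `B = ∅`, then `D` is independent and `Γ ≤ α`. Otherwise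
every `v ∈ B` has a private neighbour `p v ∉ D`, whose only neighbour in `D` is `v`
(`exists_private`). Let `C` be the set of vertices outside `D ∪ p(B)`, so `n = |A| + 2|B| + |C|`.

* All neighbours of `A` lie in `C`, so counting the edges between `A` and `C` gives
  `|A| δ ≤ |C| Δ`.
* `B` contains two distinct vertices `x`, `y`, and `A ∪ {x, p y}` is independent, so
  `|A| + 2 ≤ α`.

Together these give `2Δ(|A| + |B|) + 2(Δ - δ) ≤ Δ n + (Δ - δ) α`.
-/


/-- `D` is a dominating set of `G`: every vertex is in `D` or has a neighbour in `D`. -/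
def IsDomSet {V : Type*} (G : SimpleGraph V) (D : Finset V) : Prop :=
  ∀ v : V, v ∈ D ∨ ∃ u ∈ D, G.Adj u v

/-- `D` is a minimal dominating set of `G`. -/
def IsMinDomSet {V : Type*} (G : SimpleGraph V) (D : Finset V) : Prop :=
  IsDomSet G D ∧ ∀ D' : Finset V, D' ⊂ D → ¬ IsDomSet G D'

/-- `I` is an independent set of `G`. -/
def IsIndepFinset {V : Type*} (G : SimpleGraph V) (I : Finset V) : Prop :=
  ∀ u ∈ I, ∀ v ∈ I, ¬ G.Adj u v

/-- The independence number `α(G)`: maximum cardinality of an independent set. -/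
noncomputable def alphaNum {V : Type*} [Fintype V] (G : SimpleGraph V) : ℕ :=
  sSup {n : ℕ | ∃ I : Finset V, IsIndepFinset G I ∧ I.card = n}

/-- The upper domination number `Γ(G)`: maximum cardinality of a minimal dominating set. -/
noncomputable def upperDomNum {V : Type*} [Fintype V] (G : SimpleGraph V) : ℕ :=
  sSup {n : ℕ | ∃ D : Finset V, IsMinDomSet G D ∧ D.card = n}

section Aux

variable {V : Type*} [Fintype V] (G : SimpleGraph V)

theorem IsIndepFinset.card_le_alphaNum {G : SimpleGraph V} {I : Finset V}
    (hI : IsIndepFinset G I) : I.card ≤ alphaNum G :=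
  le_csSup ⟨Fintype.card V, by rintro _ ⟨J, -, rfl⟩; exact J.card_le_univ⟩ ⟨I, hI, rfl⟩

theorem IsMinDomSet.card_le_upperDomNum {G : SimpleGraph V} {D : Finset V}
    (hD : IsMinDomSet G D) : D.card ≤ upperDomNum G :=
  le_csSup ⟨Fintype.card V, by rintro _ ⟨J, -, rfl⟩; exact J.card_le_univ⟩ ⟨D, hD, rfl⟩

theorem exists_indep_card_eq_alphaNum : ∃ I, IsIndepFinset G I ∧ I.card = alphaNum G :=
  Nat.sSup_mem (s := {n : ℕ | ∃ I : Finset V, IsIndepFinset G I ∧ I.card = n})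
    ⟨0, ∅, by simp [IsIndepFinset], rfl⟩
    ⟨Fintype.card V, by rintro _ ⟨J, -, rfl⟩; exact J.card_le_univ⟩

theorem exists_minDomSet_card_eq_alphaNum : ∃ I, IsMinDomSet G I ∧ I.card = alphaNum G := by
  classical
  obtain ⟨I, hI, hc⟩ := exists_indep_card_eq_alphaNum G
  refine ⟨I, ⟨fun v => ?_, fun D' hD' hdom => ?_⟩, hc⟩
  · -- an undominated vertex could be added to the independent set
    by_contra! h
    obtain ⟨hv, hn⟩ := h
    have hins : IsIndepFinset G (insert v I) := by
      intro x hx y hy hxy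
      simp only [Finset.mem_insert] at hx hy
      rcases hx with rfl | hx <;> rcases hy with rfl | hy
      · exact G.irrefl hxy
      · exact hn y hy hxy.symm
      · exact hn x hx hxy
      · exact hI x hx y hy hxy
    have := hins.card_le_alphaNum
    rw [Finset.card_insert_of_notMem hv] at this
    omega
  · obtain ⟨v, hvI, hvD⟩ := Finset.exists_of_ssubset hD'
    rcases hdom v with h | ⟨u, hu, huv⟩
    · exact hvD h
    · exact hI u (hD'.1 hu) v hvI huv

theorem exists_minDomSet_card_eq_upperDomNum :
    ∃ D, IsMinDomSet G D ∧ D.card = upperDomNum G :=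
  Nat.sSup_mem (s := {n : ℕ | ∃ D : Finset V, IsMinDomSet G D ∧ D.card = n})
    (let ⟨I, h, _⟩ := exists_minDomSet_card_eq_alphaNum G; ⟨_, I, h, rfl⟩)
    ⟨Fintype.card V, by rintro _ ⟨J, -, rfl⟩; exact J.card_le_univ⟩

/-- A vertex of a minimal dominating set `D` with a neighbour in `D` has a private neighbour
outside `D`: the vertex left undominated by `D \ {v}` cannot be `v` itself. -/
theorem IsMinDomSet.exists_private {G : SimpleGraph V} {D : Finset V} (hD : IsMinDomSet G D)
    {v : V} (hv : v ∈ D) (hnb : ∃ u ∈ D, G.Adj u v) :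
    ∃ w, w ∉ D ∧ G.Adj v w ∧ ∀ u ∈ D, G.Adj u w → u = v := by
  classical
  have h := hD.2 _ (Finset.erase_ssubset hv)
  simp only [IsDomSet, not_forall, not_or, not_exists, not_and, Finset.mem_erase] at h
  obtain ⟨w, hw, hn⟩ := h
  have hpriv : ∀ u ∈ D, G.Adj u w → u = v := fun u hu huw => by
    by_contra hne
    exact hn u ⟨hne, hu⟩ huw
  have hwv : w ≠ v := by
    rintro rfl
    obtain ⟨u, hu, huv⟩ := hnb
    exact huv.ne (hpriv u hu huv)
  have hwD : w ∉ D := fun h => hw hwv h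
  obtain h | ⟨u, hu, huw⟩ := hD.1 w
  · exact absurd h hwD
  · exact ⟨w, hwD, hpriv u hu huw ▸ huw, hpriv⟩

end Aux

theorem stmt5 {V : Type*} [Fintype V] [Nonempty V] (G : SimpleGraph V)
    [DecidableRel G.Adj] (hconn : G.Connected) (hn : 2 ≤ Fintype.card V) :
    alphaNum G ≤ upperDomNum G ∧
    2 * G.maxDegree * upperDomNum G ≤
      max (2 * G.maxDegree * alphaNum G)
        (G.maxDegree * Fintype.card V + (G.maxDegree - G.minDegree) * alphaNum G
          - 2 * (G.maxDegree - G.minDegree)) := by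
  classical
  constructor
  · obtain ⟨I, hI, hc⟩ := exists_minDomSet_card_eq_alphaNum G
    exact hc ▸ hI.card_le_upperDomNum
  obtain ⟨D, hD, hDc⟩ := exists_minDomSet_card_eq_upperDomNum G
  rw [← hDc]
  by_cases hind : IsIndepFinset G D
  · exact le_max_of_le_left (Nat.mul_le_mul_left _ hind.card_le_alphaNum)
  refine le_max_of_le_right ?_
  obtain ⟨x, hx, y, hy, hxy⟩ : ∃ x ∈ D, ∃ y ∈ D, G.Adj x y := by
    simpa [IsIndepFinset] using hind
  set B := D.filter fun v => ∃ u ∈ D, G.Adj u v with hB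
  set A := D.filter fun v => ¬ ∃ u ∈ D, G.Adj u v with hA
  have hAB : B.card + A.card = D.card := Finset.card_filter_add_card_filter_not _
  have hxB : x ∈ B := Finset.mem_filter.2 ⟨hx, y, hy, hxy.symm⟩
  have hyB : y ∈ B := Finset.mem_filter.2 ⟨hy, x, hx, hxy⟩
  have hex : ∀ v, ∃ w, v ∈ B → w ∉ D ∧ G.Adj v w ∧ ∀ u ∈ D, G.Adj u w → u = v := fun v => by
    by_cases hv : v ∈ B
    · obtain ⟨hvD, hnb⟩ := Finset.mem_filter.1 hv
      obtain ⟨w, hw⟩ := hD.exists_private hvD hnb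
      exact ⟨w, fun _ => hw⟩
    · exact ⟨v, fun h => absurd h hv⟩
  choose p hp using hex
  have hBD : ∀ v ∈ B, v ∈ D := fun v hv => (Finset.mem_filter.1 hv).1
  have hAD : ∀ v ∈ A, v ∈ D := fun v hv => (Finset.mem_filter.1 hv).1
  have hAn : ∀ v ∈ A, ∀ u ∈ D, ¬ G.Adj u v := fun v hv u hu h =>
    (Finset.mem_filter.1 hv).2 ⟨u, hu, h⟩
  have hdisjAB : ∀ v ∈ A, v ∉ B := fun v hv hv' =>
    (Finset.mem_filter.1 hv).2 (Finset.mem_filter.1 hv').2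
  have hAp : ∀ v ∈ A, ∀ w ∈ B, ¬ G.Adj v (p w) := fun v hv w hw h =>
    hdisjAB v hv ((hp w hw).2.2 v (hAD v hv) h ▸ hw)
  have hpinj : (B.image p).card = B.card := Finset.card_image_of_injOn fun u hu v hv h =>
    (hp v hv).2.2 u (hBD u hu) (h ▸ (hp u hu).2.1)
  have hdisj : Disjoint D (B.image p) := by
    rw [Finset.disjoint_right]
    intro w hw
    obtain ⟨v, hv, rfl⟩ := Finset.mem_image.1 hw
    exact (hp v hv).1
  set C := (D ∪ B.image p)ᶜ with hC
  have hcard : D.card + B.card + C.card = Fintype.card V := by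
    rw [← Finset.card_add_card_compl (D ∪ B.image p), Finset.card_union_of_disjoint hdisj, hpinj]
  have hedge : A.card * G.minDegree ≤ C.card * G.maxDegree := by
    refine Finset.card_mul_le_card_mul G.Adj (fun a ha => ?_) (fun c _ => ?_)
    · refine (G.minDegree_le_degree a).trans (Finset.card_le_card fun w hw => ?_)
      rw [SimpleGraph.mem_neighborFinset] at hw
      refine Finset.mem_filter.2 ⟨?_, hw⟩
      rw [hC, Finset.mem_compl, Finset.mem_union, Finset.mem_image]
      rintro (h | ⟨v, hv, rfl⟩)
      · exact hAn a ha w h hw.symm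
      · exact hAp a ha v hv hw
    · refine le_trans (Finset.card_le_card fun w hw => ?_) (G.degree_le_maxDegree c)
      rw [SimpleGraph.mem_neighborFinset]
      exact (Finset.mem_filter.1 hw).2.symm
  have hα : A.card + 2 ≤ alphaNum G := by
    have hxpy : ¬ G.Adj x (p y) := fun h => hxy.ne ((hp y hyB).2.2 x hx h)
    have hI : IsIndepFinset G (insert x (insert (p y) A)) := by
      intro u hu v hv huv
      simp only [Finset.mem_insert] at hu hv
      rcases hu with rfl | rfl | hu <;> rcases hv with rfl | rfl | hv
      · exact G.irrefl huv
      · exact hxpy huv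
      · exact hAn v hv _ hx huv
      · exact hxpy huv.symm
      · exact G.irrefl huv
      · exact hAp v hv y hyB huv.symm
      · exact hAn u hu _ hx huv.symm
      · exact hAp u hu y hyB huv
      · exact hAn v hv u (hAD u hu) huv
    have hc := hI.card_le_alphaNum
    rw [Finset.card_insert_of_notMem, Finset.card_insert_of_notMem] at hc
    · exact hc
    · exact fun h => (hp y hyB).1 (hAD _ h)
    · rw [Finset.mem_insert]
      rintro (h | h)
      · exact (hp y hyB).1 (h ▸ hx)
      · exact hdisjAB x h hxB
  obtain ⟨e, he⟩ := Nat.exists_eq_add_of_le G.minDegree_le_maxDegree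
  have hsub : G.maxDegree - G.minDegree = e := by omega
  obtain ⟨k, hk⟩ := Nat.exists_eq_add_of_le hα
  rw [hsub, ← hcard, ← hAB, hk]
  refine Nat.le_sub_of_add_le ?_
  rw [he] at hedge ⊢
  nlinarith [Nat.zero_le (e * k)]
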